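/- arXiv:1407.2033 — 8 statements merged into one kernel-verified Lean document; each statement's English description precedes it below -/
import Mathlib

section
/- Let G = (V,E) be a finite simple undirected graph, let U ⊆ E be an edge dominating set of G, and let X be a minimal vertex cover of G. Set S = X ∩ V(U). Then X = S ∪ N(V(U) \ S). -/
/-!
In a minimal vertex cover `X` every vertex `x` has a neighbor `y` outside `X`, since otherwise
`X \ {x}` would still be a cover (`exists_adj_not_mem`). If `x` is not an endpoint of `U`, the edge
`xy` can only be dominated through `y`, so `y` lies in `V(U)` and outside `X`, and `x` is a
neighbor of it. Conversely, any neighbor of a vertex outside the cover `X` is in `X`.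
-/

/-- The set of all endpoints of edges in a set `U` of edges. -/
def edgeEndpoints {V : Type*} (U : Set (Sym2 V)) : Set V := {v | ∃ e ∈ U, v ∈ e}

/-- The neighborhood of a set of vertices `A`: all vertices adjacent to some vertex of `A`. -/
def setNbhd {V : Type*} (G : SimpleGraph V) (A : Set V) : Set V := {v | ∃ u ∈ A, G.Adj u v}

/-- Every vertex of a minimal vertex cover has a private edge, one whose other end is not
in the cover. -/
theorem exists_adj_not_mem {V : Type*} (G : SimpleGraph V) (X : Set V)
    (hX : ∀ a b, G.Adj a b → a ∈ X ∨ b ∈ X)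
    (hmin : ∀ Y, Y ⊂ X → ¬ (∀ a b, G.Adj a b → a ∈ Y ∨ b ∈ Y))
    {x : V} (hx : x ∈ X) : ∃ y, G.Adj x y ∧ y ∉ X := by
  by_contra! h
  refine hmin (X \ {x}) (Set.sdiff_singleton_ssubset.2 hx) fun a b hab => ?_
  by_cases ha : a = x
  · subst ha
    exact Or.inr ⟨h b hab, hab.ne'⟩
  · by_cases hb : b = x
    · subst hb
      exact Or.inl ⟨h a hab.symm, ha⟩
    · exact (hX a b hab).imp (fun h => ⟨h, ha⟩) (fun h => ⟨h, hb⟩)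

/-- If `U` is an edge dominating set of `G` and `X` a minimal vertex cover of `G`,
then, with `S = X ∩ V(U)`, we have `X = S ∪ N(V(U) \ S)`. -/
theorem stmt1 {V : Type*} [Fintype V] (G : SimpleGraph V)
    (U : Set (Sym2 V)) (hUsub : U ⊆ G.edgeSet)
    (hU : ∀ e ∈ G.edgeSet, ∃ f ∈ U, ∃ v, v ∈ e ∧ v ∈ f)
    (X : Set V) (hX : ∀ a b, G.Adj a b → a ∈ X ∨ b ∈ X)
    (hmin : ∀ Y, Y ⊂ X → ¬ (∀ a b, G.Adj a b → a ∈ Y ∨ b ∈ Y)) :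
    X = (X ∩ edgeEndpoints U) ∪
        setNbhd G (edgeEndpoints U \ (X ∩ edgeEndpoints U)) := by
  ext x
  constructor
  · intro hx
    by_cases hxU : x ∈ edgeEndpoints U
    · exact Or.inl ⟨hx, hxU⟩
    · obtain ⟨y, hxy, hy⟩ := exists_adj_not_mem G X hX hmin hx
      obtain ⟨f, hf, v, hv, hvf⟩ := hU s(x, y) hxy
      rcases Sym2.mem_iff.1 hv with rfl | rfl
      · exact absurd ⟨f, hf, hvf⟩ hxU
      · exact Or.inr ⟨v, ⟨⟨f, hf, hvf⟩, fun h => hy h.1⟩, hxy.symm⟩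
  · rintro (hx | ⟨u, ⟨huU, hu⟩, hux⟩)
    · exact hx.1
    · exact (hX u x hux).resolve_left fun h => hu ⟨h, huU⟩
end

section
/- Let G be a finite directed graph and let r be a vertex of G such that G has an out-branching rooted at r. Then for every out-tree T of G rooted at r, there exists an out-branching of G whose set of internal vertices contains the set of internal vertices of T. -/
/-!
The branching is obtained by growing `T`. Whenever an out-tree rooted at `r` is not spanning,
the path of `H` from `r` to a missed vertex leaves the tree along some edge `u → v` of `G`
(`exists_leaving_edge`); attaching `v` below `u` as a new leaf gives a larger out-tree
(`exists_extension`). Edges are only ever added, so internal vertices stay internal, and by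
finiteness the process ends with a spanning out-tree.
-/

/-- An out-tree of a directed graph `G` (given as an adjacency relation) rooted at `r`:
a subgraph (given by its vertex set and edge set) in which the root has in-degree 0,
every other vertex has in-degree exactly 1, and every vertex is reachable from `r`
along edges of the tree. -/
structure OutTree {V : Type*} (G : V → V → Prop) (r : V) where
  verts : Set V
  edges : Set (V × V)
  sub : ∀ e ∈ edges, G e.1 e.2
  edge_mem : ∀ e ∈ edges, e.1 ∈ verts ∧ e.2 ∈ verts
  root_mem : r ∈ verts
  root_no_in : ∀ u, (u, r) ∉ edges
  unique_parent : ∀ v ∈ verts, v ≠ r → ∃! u, (u, v) ∈ edges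
  reach : ∀ v ∈ verts, Relation.ReflTransGen (fun a b => (a, b) ∈ edges) r v

/-- The internal vertices of an out-tree: vertices with out-degree at least 1. -/
def OutTree.internal {V : Type*} {G : V → V → Prop} {r : V} (T : OutTree G r) : Set V :=
  {v | v ∈ T.verts ∧ ∃ u, (v, u) ∈ T.edges}

/-- The leaves of an out-tree: vertices with out-degree 0. -/
def OutTree.leaves {V : Type*} {G : V → V → Prop} {r : V} (T : OutTree G r) : Set V :=
  {v | v ∈ T.verts ∧ ∀ u, (v, u) ∉ T.edges}

/-- An out-branching: a spanning out-tree. -/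
def OutTree.IsBranching {V : Type*} {G : V → V → Prop} {r : V} (T : OutTree G r) : Prop :=
  T.verts = Set.univ

/-- A walk of `R` that starts inside `S` and ends outside it uses an edge leaving `S`. -/
theorem exists_leaving_edge {V : Type*} {R : V → V → Prop} {S : Set V} {r x : V}
    (hr : r ∈ S) (hx : x ∉ S) (h : Relation.ReflTransGen R r x) :
    ∃ u ∈ S, ∃ v ∉ S, R u v := by
  induction h with
  | refl => exact absurd hr hx
  | @tail b c _ hbc ih =>
    by_cases hb : b ∈ S
    · exact ⟨b, hb, c, hx, hbc⟩
    · exact ih hb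

/-- A vertex outside an out-tree can be attached as a new leaf along an edge of `G`. -/
theorem exists_extension {V : Type*} {G : V → V → Prop} {r : V} (T : OutTree G r) {u v : V}
    (hu : u ∈ T.verts) (hv : v ∉ T.verts) (huv : G u v) :
    ∃ T' : OutTree G r, T'.verts = insert v T.verts ∧ T.internal ⊆ T'.internal := by
  have hmono : ∀ w ∈ T.verts,
      Relation.ReflTransGen (fun a b => (a, b) ∈ insert (u, v) T.edges) r w := fun w hw =>
    Relation.ReflTransGen.mono (fun _ _ h => Set.mem_insert_of_mem _ h) _ _ (T.reach w hw)
  refine ⟨{ verts := insert v T.verts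
            edges := insert (u, v) T.edges
            sub := ?_
            edge_mem := ?_
            root_mem := Set.mem_insert_of_mem _ T.root_mem
            root_no_in := ?_
            unique_parent := ?_
            reach := ?_ }, rfl, ?_⟩
  · rintro e (rfl | he)
    · exact huv
    · exact T.sub e he
  · rintro e (rfl | he)
    · exact ⟨Set.mem_insert_of_mem _ hu, Set.mem_insert _ _⟩
    · exact ⟨Set.mem_insert_of_mem _ (T.edge_mem e he).1,
        Set.mem_insert_of_mem _ (T.edge_mem e he).2⟩
  · rintro w (h | h)
    · obtain ⟨-, rfl⟩ := Prod.mk.inj h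
      exact hv T.root_mem
    · exact T.root_no_in w h
  · rintro w (rfl | hw) hwr
    · refine ⟨u, Set.mem_insert _ _, ?_⟩
      rintro y (h | h)
      · exact (Prod.mk.inj h).1
      · exact absurd (T.edge_mem _ h).2 hv
    · obtain ⟨p, hp, hup⟩ := T.unique_parent w hw hwr
      refine ⟨p, Set.mem_insert_of_mem _ hp, ?_⟩
      rintro y (h | h)
      · obtain ⟨-, rfl⟩ := Prod.mk.inj h
        exact absurd hw hv
      · exact hup y h
  · rintro w (rfl | hw)
    · exact (hmono u hu).tail (Set.mem_insert _ _)
    · exact hmono w hw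
  · rintro w ⟨hw, y, hy⟩
    exact ⟨Set.mem_insert_of_mem _ hw, y, Set.mem_insert_of_mem _ hy⟩

/-- If a finite directed graph `G` has an out-branching rooted at `r`, then for every
out-tree `T` of `G` rooted at `r` there is an out-branching of `G` whose set of internal
vertices contains that of `T`. -/
theorem stmt3 {V : Type*} [Fintype V] (G : V → V → Prop) (r : V)
    (H : OutTree G r) (hH : H.IsBranching) :
    ∀ T : OutTree G r, ∃ B : OutTree G r, B.IsBranching ∧ T.internal ⊆ B.internal := by
  intro T
  -- Induction on the number of vertices the tree misses.
  induction hn : (T.vertsᶜ).ncard using Nat.strong_induction_on generalizing T with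
  | _ n ih =>
    by_cases hT : T.verts = Set.univ
    · exact ⟨T, hT, subset_rfl⟩
    · obtain ⟨x, hx⟩ := (Set.ne_univ_iff_exists_notMem _).1 hT
      have hxH : x ∈ H.verts := by rw [hH]; trivial
      obtain ⟨u, hu, v, hv, huv⟩ := exists_leaving_edge T.root_mem hx (H.reach x hxH)
      obtain ⟨T', hT', hint⟩ := exists_extension T hu hv (H.sub _ huv)
      have hlt : (T'.vertsᶜ).ncard < n := by
        rw [← hn, hT']
        exact Set.ncard_lt_ncard (compl_lt_compl_iff_lt.2 (Set.ssubset_insert hv)) (Set.toFinite _)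
      obtain ⟨B, hB, hsub⟩ := ih _ hlt T' rfl
      exact ⟨B, hB, hint.trans hsub⟩
end

section
/- Let G = (V,E) be a finite simple undirected graph in which every vertex has degree at most 3, and suppose G has a vertex cover. Then G has a good minimum vertex cover; that is, a minimum vertex cover U for which there exists a function f : C₃*(G,U) → P₂(G,U) such that for each triangle c₃ ∈ C₃*(G,U) there is a vertex in V \ U that is adjacent to some vertex of c₃ and to both vertices of f(c₃). -/
/-!
Among all minimum vertex covers, take one, `U`, whose induced subgraph has the fewest triangle
components. Every vertex of a minimum vertex cover has a neighbor outside it, so, as degrees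
are at most 3, each vertex of a triangle component `T` has exactly one neighbor outside `U`. If the
three of them have no common outside neighbor, then some `x ∉ U` is adjacent to exactly one vertex
`a` of `T` (`exists_private_neighbor`).

Exchanging `a` for `x` gives another minimum vertex cover `U'`, in which `T` is destroyed. Every
triangle component of `G[U']` avoiding `x` was already one of `G[U]` (`IsTriangleComp.of_swap`), so
by the choice of `U` there must be a triangle component of `G[U']` containing `x`. Its other two
vertices form a `P₂`-component of `G[U]` (`IsTriangleComp.erase_swap`), and both are adjacent to `x`,
so this component is a valid value of `f` at `T`.
-/

variable {V : Type*}

/-- A vertex cover of a simple graph. -/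
def IsVertexCover (G : SimpleGraph V) (U : Finset V) : Prop :=
  ∀ a b, G.Adj a b → a ∈ U ∨ b ∈ U

/-- A minimum vertex cover: a vertex cover of minimum cardinality. -/
def IsMinVertexCover (G : SimpleGraph V) (U : Finset V) : Prop :=
  IsVertexCover G U ∧ ∀ U' : Finset V, IsVertexCover G U' → U.card ≤ U'.card

/-- `c` is a connected component of `G[U]` that is a triangle: `c ⊆ U` consists of three
pairwise adjacent vertices, with no edges of `G[U]` leaving `c`. -/
def IsTriangleComp (G : SimpleGraph V) (U : Finset V) (c : Finset V) : Prop :=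
  c ⊆ U ∧ c.card = 3 ∧ (∀ a ∈ c, ∀ b ∈ c, a ≠ b → G.Adj a b) ∧
    (∀ a ∈ c, ∀ b ∈ U, b ∉ c → ¬ G.Adj a b)

/-- `p` is a connected component of `G[U]` that is a path on two vertices. -/
def IsP2Comp (G : SimpleGraph V) (U : Finset V) (p : Finset V) : Prop :=
  p ⊆ U ∧ p.card = 2 ∧ (∀ a ∈ p, ∀ b ∈ p, a ≠ b → G.Adj a b) ∧
    (∀ a ∈ p, ∀ b ∈ U, b ∉ p → ¬ G.Adj a b)

/-- `c` is a triangle component of `G[U]` whose three vertices have no common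
neighbor outside `U` (i.e. `c ∈ C₃*(G,U)`). -/
def IsTriStarComp (G : SimpleGraph V) (U : Finset V) (c : Finset V) : Prop :=
  IsTriangleComp G U c ∧ ¬ ∃ x, x ∉ U ∧ ∀ a ∈ c, G.Adj x a

/-- A good minimum vertex cover: a minimum vertex cover `U` with a function `f` mapping
each triangle in `C₃*(G,U)` to a path in `P₂(G,U)` such that some vertex outside `U` is
adjacent to a vertex of the triangle and to both vertices of the path. -/
def IsGoodMinVC (G : SimpleGraph V) (U : Finset V) : Prop :=
  IsMinVertexCover G U ∧
  ∃ f : Finset V → Finset V,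
    ∀ c, IsTriStarComp G U c →
      IsP2Comp G U (f c) ∧
      ∃ x, x ∉ U ∧ (∃ a ∈ c, G.Adj x a) ∧ (∀ b ∈ f c, G.Adj x b)

/-- A vertex of degree at most 3 has no neighbor besides three given ones. -/
theorem eq_of_three_neighbors [Fintype V] [DecidableEq V] (G : SimpleGraph V) [DecidableRel G.Adj]
    {v p q r w : V} (hdeg : G.degree v ≤ 3) (hpq : p ≠ q) (hpr : p ≠ r) (hqr : q ≠ r)
    (hp : G.Adj v p) (hq : G.Adj v q) (hr : G.Adj v r) (hw : G.Adj v w) :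
    w = p ∨ w = q ∨ w = r := by
  by_contra! h
  obtain ⟨h1, h2, h3⟩ := h
  have hsub : ({w, p, q, r} : Finset V) ⊆ G.neighborFinset v := by
    intro u hu
    simp only [Finset.mem_insert, Finset.mem_singleton] at hu
    rw [SimpleGraph.mem_neighborFinset]
    rcases hu with rfl | rfl | rfl | rfl <;> assumption
  have hle := Finset.card_le_card hsub
  have hcard : ({w, p, q, r} : Finset V).card = 4 := by
    rw [Finset.card_insert_of_notMem (by simp [h1, h2, h3]),
      Finset.card_insert_of_notMem (by simp [hpq, hpr]), Finset.card_pair hqr]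
  rw [hcard, SimpleGraph.card_neighborFinset_eq_degree] at hle
  omega

/-- Otherwise the vertex could be removed from the cover. -/
theorem IsMinVertexCover.exists_outside_neighbor [DecidableEq V] {G : SimpleGraph V}
    {U : Finset V} (hU : IsMinVertexCover G U) {v : V} (hv : v ∈ U) :
    ∃ x, x ∉ U ∧ G.Adj v x := by
  by_contra! h
  have hcov : IsVertexCover G (U.erase v) := by
    intro a b hab
    have hne := hab.ne
    have h1 := hU.1 a b hab
    have h2 := h b
    have h3 := h a
    have h4 := hab.symm
    simp only [Finset.mem_erase]
    grind
  have h1 := hU.2 _ hcov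
  have h2 := Finset.card_erase_lt_of_mem hv
  omega

theorem exists_private_neighbor [Fintype V] [DecidableEq V] (G : SimpleGraph V)
    [DecidableRel G.Adj] (hdeg : ∀ v, G.degree v ≤ 3) {U T : Finset V}
    (hU : IsMinVertexCover G U) (hT : IsTriStarComp G U T) :
    ∃ a ∈ T, ∃ x, x ∉ U ∧ G.Adj a x ∧ (∀ v ∈ T, v ≠ a → ¬ G.Adj x v) ∧
      ∀ w, G.Adj a w → w ∈ T ∨ w = x := by
  obtain ⟨⟨hTU, hcard, hadj, -⟩, hno⟩ := hT
  obtain ⟨p, q, r, hpq, hpr, hqr, rfl⟩ := Finset.card_eq_three.mp hcard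
  have hpU : p ∈ U := hTU (by simp)
  have hqU : q ∈ U := hTU (by simp)
  have hrU : r ∈ U := hTU (by simp)
  have apq : G.Adj p q := hadj p (by simp) q (by simp) hpq
  have apr : G.Adj p r := hadj p (by simp) r (by simp) hpr
  have aqr : G.Adj q r := hadj q (by simp) r (by simp) hqr
  obtain ⟨x, hx, hpx⟩ := hU.exists_outside_neighbor hpU
  obtain ⟨y, hy, hqy⟩ := hU.exists_outside_neighbor hqU
  obtain ⟨z, hz, hrz⟩ := hU.exists_outside_neighbor hrU
  have np : ∀ w, G.Adj p w → w = q ∨ w = r ∨ w = x := fun w hw =>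
    eq_of_three_neighbors G (hdeg p) hqr (by grind) (by grind) apq apr hpx hw
  have nq : ∀ w, G.Adj q w → w = p ∨ w = r ∨ w = y := fun w hw =>
    eq_of_three_neighbors G (hdeg q) hpr (by grind) (by grind) apq.symm aqr hqy hw
  have nr : ∀ w, G.Adj r w → w = p ∨ w = q ∨ w = z := fun w hw =>
    eq_of_three_neighbors G (hdeg r) hpq (by grind) (by grind) apr.symm aqr.symm hrz hw
  have hne : ¬ (x = y ∧ x = z) := by
    rintro ⟨rfl, rfl⟩
    refine hno ⟨x, hx, ?_⟩
    intro a ha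
    simp only [Finset.mem_insert, Finset.mem_singleton] at ha
    rcases ha with rfl | rfl | rfl
    exacts [hpx.symm, hqy.symm, hrz.symm]
  have hsymm : ∀ {u v}, G.Adj u v → G.Adj v u := fun h => h.symm
  simp only [Finset.mem_insert, Finset.mem_singleton]
  -- Three points not all equal: one of them differs from the other two.
  have hcases : (x ≠ y ∧ x ≠ z) ∨ (y ≠ x ∧ y ≠ z) ∨ (z ≠ x ∧ z ≠ y) := by grind
  rcases hcases with ⟨h1, h2⟩ | ⟨h1, h2⟩ | ⟨h1, h2⟩
  · exact ⟨p, by simp, x, hx, hpx, by grind, by grind⟩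
  · exact ⟨q, by simp, y, hy, hqy, by grind, by grind⟩
  · exact ⟨r, by simp, z, hz, hrz, by grind, by grind⟩

theorem IsMinVertexCover.swap [DecidableEq V] {G : SimpleGraph V} {U T : Finset V}
    (hU : IsMinVertexCover G U) (hTU : T ⊆ U) {a x : V} (haT : a ∈ T) (hx : x ∉ U)
    (hN : ∀ w, G.Adj a w → w ∈ T ∨ w = x) :
    IsMinVertexCover G (insert x (U.erase a)) := by
  have haU := hTU haT
  have hmem : ∀ w, G.Adj a w → w ∈ insert x (U.erase a) := by
    intro w hw
    have hne := hw.ne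
    have h1 := hN w hw
    have h2 := @hTU w
    simp only [Finset.mem_insert, Finset.mem_erase]
    grind
  refine ⟨?_, ?_⟩
  · intro u v huv
    by_cases hu : u = a
    · subst hu
      exact Or.inr (hmem v huv)
    by_cases hv : v = a
    · subst hv
      exact Or.inl (hmem u huv.symm)
    have h1 := hU.1 u v huv
    simp only [Finset.mem_insert, Finset.mem_erase]
    grind
  · have hc : (insert x (U.erase a)).card = U.card := by
      rw [Finset.card_insert_of_notMem (by simp [hx]), Finset.card_erase_add_one haU]
    rw [hc]
    exact hU.2

/-- A triangle component after the exchange of `a` for `x` that avoids `x` was a triangle component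
before, and is not the triangle of `a`. -/
theorem IsTriangleComp.of_swap [DecidableEq V] {G : SimpleGraph V} {U T t : Finset V}
    (hT : IsTriangleComp G U T) {a x : V} (haT : a ∈ T) (hx : x ∉ U)
    (hN : ∀ w, G.Adj a w → w ∈ T ∨ w = x)
    (ht : IsTriangleComp G (insert x (U.erase a)) t) (hxt : x ∉ t) :
    IsTriangleComp G U t ∧ t ≠ T := by
  obtain ⟨hTU, hTc, hTa, hTo⟩ := hT
  obtain ⟨htU, htc, hta, hto⟩ := ht
  have hax : a ≠ x := fun h => hx (h ▸ hTU haT)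
  have hat : a ∉ t := fun h => by simpa [hax] using htU h
  have htU' : t ⊆ U := by
    intro u hu
    have h1 := htU hu
    simp only [Finset.mem_insert, Finset.mem_erase] at h1
    grind
  have htT : t ≠ T := fun h => hat (h ▸ haT)
  refine ⟨⟨htU', htc, hta, ?_⟩, htT⟩
  intro u hu v hv hvt huv
  by_cases hva : v = a
  · subst hva
    have huT : u ∈ T := (hN u huv.symm).resolve_right (fun h => hxt (h ▸ hu))
    -- `t` meets the component `T` of `G[U]`, so it is contained in it.
    have hsub : t ⊆ T := by
      intro s hs
      by_contra hsT
      have hus : u ≠ s := fun h => hsT (h ▸ huT)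
      exact hTo u huT s (htU' hs) hsT (hta u hu s hs hus)
    exact htT (Finset.eq_of_subset_of_card_le hsub (by omega))
  · exact hto u hu v (by simp [hva, hv]) hvt huv

/-- A triangle component that contains `x` after the exchange of `a` for `x` came from a
`P₂`-component before it. -/
theorem IsTriangleComp.erase_swap [DecidableEq V] {G : SimpleGraph V} {U T t : Finset V} {a x : V}
    (hx : x ∉ U)
    (hpriv : ∀ v ∈ T, v ≠ a → ¬ G.Adj x v)
    (hN : ∀ w, G.Adj a w → w ∈ T ∨ w = x)
    (ht : IsTriangleComp G (insert x (U.erase a)) t) (hxt : x ∈ t) :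
    IsP2Comp G U (t.erase x) := by
  obtain ⟨htU, htc, hta, hto⟩ := ht
  refine ⟨?_, ?_, ?_, ?_⟩
  · intro u hu
    have h1 := htU (Finset.mem_of_mem_erase hu)
    have h2 := Finset.ne_of_mem_erase hu
    simp only [Finset.mem_insert, Finset.mem_erase] at h1
    grind
  · rw [Finset.card_erase_of_mem hxt, htc]
  · intro u hu v hv
    exact hta u (Finset.mem_of_mem_erase hu) v (Finset.mem_of_mem_erase hv)
  · intro u hu v hv hvp huv
    obtain ⟨hux, hut⟩ := Finset.mem_erase.mp hu
    have hvx : v ≠ x := fun h => hx (h ▸ hv)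
    have hvt : v ∉ t := fun h => hvp (Finset.mem_erase.mpr ⟨hvx, h⟩)
    by_cases hva : v = a
    · subst hva
      have huT : u ∈ T := (hN u huv.symm).resolve_right hux
      exact hpriv u huT huv.ne (hta x hxt u hut hux.symm)
    · exact hto u hut v (by simp [hva, hv]) hvt huv

/-- Every finite simple graph of maximum degree at most 3 that has a vertex cover
has a good minimum vertex cover. -/
theorem stmt6 [Fintype V] [DecidableEq V] (G : SimpleGraph V) [DecidableRel G.Adj]
    (hdeg : ∀ v, G.degree v ≤ 3) (hvc : ∃ C : Finset V, IsVertexCover G C) :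
    ∃ U : Finset V, IsGoodMinVC G U := by
  classical
  have hne : (Finset.univ.filter (IsMinVertexCover G)).Nonempty := by
    obtain ⟨C, hC⟩ := hvc
    obtain ⟨U, hU, hmin⟩ := Finset.exists_min_image (Finset.univ.filter (IsVertexCover G))
      Finset.card ⟨C, by simpa using hC⟩
    exact ⟨U, by simpa using ⟨by simpa using hU, fun U' hU' => hmin U' (by simpa using hU')⟩⟩
  obtain ⟨U, hU, hmin⟩ := Finset.exists_min_image (Finset.univ.filter (IsMinVertexCover G))
    (fun U => (Finset.univ.filter (IsTriangleComp G U)).card) hne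
  replace hU : IsMinVertexCover G U := by simpa using hU
  refine ⟨U, hU, ?_⟩
  have key : ∀ T, ∃ p, IsTriStarComp G U T → IsP2Comp G U p ∧
      ∃ x, x ∉ U ∧ (∃ a ∈ T, G.Adj x a) ∧ (∀ b ∈ p, G.Adj x b) := by
    intro T
    by_cases hT : IsTriStarComp G U T
    · obtain ⟨a, haT, x, hx, hax, hpriv, hN⟩ := exists_private_neighbor G hdeg hU hT
      by_cases hex : ∃ t, IsTriangleComp G (insert x (U.erase a)) t ∧ x ∈ t
      · obtain ⟨t, ht, hxt⟩ := hex
        refine ⟨t.erase x, fun _ => ⟨ht.erase_swap hx hpriv hN hxt, x, hx,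
          ⟨a, haT, hax.symm⟩, fun b hb => ?_⟩⟩
        exact ht.2.2.1 x hxt b (Finset.mem_of_mem_erase hb) (Finset.ne_of_mem_erase hb).symm
      · -- Without such a triangle the exchange lowers the number of triangle components.
        exfalso
        have hlt : (Finset.univ.filter (IsTriangleComp G (insert x (U.erase a)))).card <
            (Finset.univ.filter (IsTriangleComp G U)).card := by
          apply Finset.card_lt_card
          rw [Finset.ssubset_iff_of_subset]
          · refine ⟨T, by simpa using hT.1, fun h => ?_⟩
            have hTs : IsTriangleComp G (insert x (U.erase a)) T := by simpa using h
            exact (hT.1.of_swap haT hx hN hTs (fun hxT => hx (hT.1.1 hxT))).2 rfl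
          · intro t ht
            have ht' : IsTriangleComp G (insert x (U.erase a)) t := by simpa using ht
            simpa using (hT.1.of_swap haT hx hN ht' (fun hxt => hex ⟨t, ht', hxt⟩)).1
        have hle := hmin _ (by simpa using hU.swap hT.1.1 haT hx hN)
        omega
    · exact ⟨∅, fun h => absurd h hT⟩
  choose f hf using key
  exact ⟨f, hf⟩
end

section
/- Let G = (V,E) be a finite simple undirected graph in which every vertex has degree at most 3, let U be a minimum vertex cover of G, and let c₃ be a connected component of G[U] that is a triangle whose three vertices have no common neighbor in V \ U. Then every vertex v of c₃ has exactly one neighbor outside the vertex set of c₃, and this neighbor belongs to V \ U. -/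
/-!
Neighbours of `v` outside the triangle `c` avoid `U` because `c` is a component of `G[U]`.
There is at least one, since otherwise `U \ {v}` would be a smaller vertex cover, and at most
one, since two of the at most three neighbours of `v` already lie in `c`.
-/

variable {V : Type*}

/-- Let `G` have maximum degree at most 3, `U` be a minimum vertex cover, and `c` a
triangle component of `G[U]` whose vertices have no common neighbor outside `U`.
Then every vertex of `c` has exactly one neighbor outside `c`, and this neighbor
lies outside `U`. -/
theorem stmt7 [Fintype V] [DecidableEq V] (G : SimpleGraph V) [DecidableRel G.Adj]
    (hdeg : ∀ v, G.degree v ≤ 3)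
    (U : Finset V) (hU : IsMinVertexCover G U)
    (c : Finset V) (hc : IsTriangleComp G U c)
    (hstar : ¬ ∃ x, x ∉ U ∧ ∀ a ∈ c, G.Adj x a) :
    ∀ v ∈ c, (∃! u, G.Adj v u ∧ u ∉ c) ∧ (∀ u, G.Adj v u → u ∉ c → u ∉ U) := by
  obtain ⟨hcov, hmin⟩ := hU
  obtain ⟨hcU, hcard, htri, hiso⟩ := hc
  intro v hv
  have hout : ∀ u, G.Adj v u → u ∉ c → u ∉ U := fun u hu huc huU => hiso v hv u huU huc hu
  refine ⟨?_, hout⟩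
  have hex : ∃ u, G.Adj v u ∧ u ∉ c := by
    by_contra! hno
    -- Every neighbour of `v` lies in `c`, so deleting `v` from `U` leaves a vertex cover.
    have hcov' : IsVertexCover G (U.erase v) := by
      intro a b hab
      by_cases ha : a = v
      · subst ha
        exact Or.inr (Finset.mem_erase.2 ⟨hab.ne', hcU (hno b hab)⟩)
      · by_cases hb : b = v
        · subst hb
          exact Or.inl (Finset.mem_erase.2 ⟨ha, hcU (hno a hab.symm)⟩)
        · exact (hcov a b hab).imp (fun h => Finset.mem_erase.2 ⟨ha, h⟩)
            (fun h => Finset.mem_erase.2 ⟨hb, h⟩)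
    have h1 := hmin _ hcov'
    have h2 := Finset.card_erase_lt_of_mem (hcU hv)
    omega
  obtain ⟨u, hu, huc⟩ := hex
  refine ⟨u, ⟨hu, huc⟩, ?_⟩
  rintro w ⟨hw, hwc⟩
  by_contra hne
  -- The other two vertices of `c` together with `u` and `w` are four neighbours of `v`.
  have hsub : insert w (insert u (c.erase v)) ⊆ G.neighborFinset v := by
    intro x hx
    rw [SimpleGraph.mem_neighborFinset]
    simp only [Finset.mem_insert, Finset.mem_erase] at hx
    rcases hx with rfl | rfl | ⟨hxv, hxc⟩
    · exact hw
    · exact hu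
    · exact htri v hv x hxc (Ne.symm hxv)
  have hle := Finset.card_le_card hsub
  rw [Finset.card_insert_of_notMem (by simp [hne, hwc]),
    Finset.card_insert_of_notMem (by simp [huc]), Finset.card_erase_of_mem hv, hcard,
    SimpleGraph.card_neighborFinset_eq_degree] at hle
  have := hdeg v
  omega
end

section
/- Let G = (L,R,E) be a finite bipartite graph, let n = |L| + |R|, and let k_L ≤ |L| and k_R ≤ |R| be nonnegative integers. Define a bipartite graph G' = (L',R',E') by L' = L, R' = R ∪ {x^v_1,…,x^v_{n²} : v ∈ L} (the vertices x^v_i being new and distinct), and E' = E ∪ {{v, x^v_i} : v ∈ L, 1 ≤ i ≤ n²}. Define weights w' by w'(v) = n^{10} for v ∈ L' and w'(v) = 1 for v ∈ R', and set W' = n^{10}·k_L + k_R + n²·(|L| − k_L) and k' = k_L + k_R + n²·(|L| − k_L). Then G has a vertex cover consisting of exactly k_L vertices from L and at most k_R vertices from R if and only if G' has a vertex cover S' with w'(S') ≤ W' and |S'| ≤ k'. -/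
/-!
Write `a`, `b`, `c` for the number of vertices of a cover `S'` in `L`, in `R`, and among the
pendant vertices. Every `v ∈ L` outside `S'` forces its `n²` pendant neighbours into `S'`, so
`c ≥ n² (|L| - a)`.

Given a cover of `G` with `kL` and at most `kR` vertices, adding the pendant neighbours of the
unchosen vertices of `L` gives a cover of `G'` within both budgets. Conversely:

* If `a ≤ kL`, then since each vertex of `L` missing from `S'` costs `n² ≥ 1` pendant vertices, the
  size bound gives `b ≤ kR`, and padding `S' ∩ L` to exactly `kL` vertices keeps a cover of `G`.
* If `a > kL`, the weight bound gives `n^10 ≤ kR + n² (|L| - kL) ≤ n³`, which is impossible for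
  `n ≥ 2`. Since `L` is then nonempty, `n ≤ 1` is only possible when `R` is empty; in that case `G`
  has no edges and any `kL` vertices of `L` work.
-/

/-- Weight of a vertex set of `G'` (with `L`-vertices of weight `N`), split over the two sides. -/
lemma weight_split {A B : Type*} (N : ℕ) (S : Finset (A ⊕ B)) :
    (∑ x ∈ S, Sum.elim (fun _ => N) (fun _ => 1) x) = N * S.toLeft.card + S.toRight.card := by
  conv_lhs => rw [← Finset.toLeft_disjSum_toRight (u := S)]
  rw [Finset.sum_disjSum]
  simp [mul_comm]

/-- The NP-hardness reduction for Restricted k-WVC on bipartite graphs: `G` (given by the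
bipartite adjacency relation `E` between sides `L` and `R`) has a vertex cover with exactly
`kL` vertices from `L` and at most `kR` vertices from `R` iff the constructed weighted graph
`G'` (with `n²` new pendant neighbors attached to each vertex of `L`, weights `n^10` on `L`
and `1` elsewhere) has a vertex cover of weight at most `W'` and size at most `k'`. -/
theorem stmt8 {L R : Type*} [Fintype L] [Fintype R] [DecidableEq L] [DecidableEq R]
    (E : L → R → Prop) (n kL kR : ℕ)
    (hn : n = Fintype.card L + Fintype.card R)
    (hkL : kL ≤ Fintype.card L) (hkR : kR ≤ Fintype.card R) :
    (∃ (SL : Finset L) (SR : Finset R), SL.card = kL ∧ SR.card ≤ kR ∧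
        ∀ v u, E v u → v ∈ SL ∨ u ∈ SR) ↔
    (∃ S' : Finset (L ⊕ (R ⊕ (L × Fin (n ^ 2)))),
        (∀ v u, E v u → Sum.inl v ∈ S' ∨ Sum.inr (Sum.inl u) ∈ S') ∧
        (∀ (v : L) (i : Fin (n ^ 2)), Sum.inl v ∈ S' ∨ Sum.inr (Sum.inr (v, i)) ∈ S') ∧
        (∑ x ∈ S', Sum.elim (fun _ => n ^ 10) (fun _ => 1) x) ≤
          n ^ 10 * kL + kR + n ^ 2 * (Fintype.card L - kL) ∧
        S'.card ≤ kL + kR + n ^ 2 * (Fintype.card L - kL)) := by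
  constructor
  · rintro ⟨SL, SR, hL, hR, hcov⟩
    refine ⟨SL.disjSum (SR.disjSum (SLᶜ ×ˢ Finset.univ)), ?_, ?_, ?_, ?_⟩
    · intro v u h
      simpa using hcov v u h
    · intro v i
      simp [em]
    · rw [weight_split]
      simp only [Finset.toLeft_disjSum, Finset.toRight_disjSum, Finset.card_disjSum,
        Finset.card_product, Finset.card_compl, Finset.card_univ, Fintype.card_fin, hL]
      rw [mul_comm (n ^ 2)]
      omega
    · simp only [Finset.card_disjSum,
        Finset.card_product, Finset.card_compl, Finset.card_univ, Fintype.card_fin, hL]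
      rw [mul_comm (n ^ 2)]
      omega
  · rintro ⟨S, hE, hP, hW, hC⟩
    rw [weight_split] at hW
    have hc1 : S.toLeft.card + S.toRight.card = S.card := Finset.card_toLeft_add_card_toRight
    have hc2 : S.toRight.toLeft.card + S.toRight.toRight.card = S.toRight.card :=
      Finset.card_toLeft_add_card_toRight
    have hc3 : (Fintype.card L - S.toLeft.card) * n ^ 2 ≤ S.toRight.toRight.card := by
      have hsub : S.toLeftᶜ ×ˢ (Finset.univ : Finset (Fin (n ^ 2))) ⊆ S.toRight.toRight := by
        rintro ⟨v, i⟩ h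
        have hv : Sum.inl v ∉ S := by simpa using h
        simpa using (hP v i).resolve_left hv
      simpa [Finset.card_product, Finset.card_compl] using Finset.card_le_card hsub
    have haL : S.toLeft.card ≤ Fintype.card L := Finset.card_le_univ _
    rcases le_or_gt S.toLeft.card kL with ha | ha
    · obtain ⟨T, hT, hTc⟩ := Finset.exists_superset_card_eq ha hkL
      refine ⟨T, S.toRight.toLeft, hTc, ?_, ?_⟩
      · obtain ⟨d, hd⟩ := Nat.exists_eq_add_of_le ha
        have hsplit : Fintype.card L - S.toLeft.card = (Fintype.card L - kL) + d := by omega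
        have hdn : d ≤ d * n ^ 2 := by
          rcases Nat.eq_zero_or_pos n with h0 | h0
          -- `n = 0` forces `L` to be empty, hence `d = 0`.
          · have : d = 0 := by omega
            simp [this]
          · exact Nat.le_mul_of_pos_right d (by positivity)
        rw [hsplit, add_mul] at hc3
        rw [mul_comm (n ^ 2)] at hC
        omega
      · intro v u h
        rcases hE v u h with h | h
        · exact Or.inl (hT (by simpa using h))
        · exact Or.inr (by simpa using h)
    · rcases isEmpty_or_nonempty R with hR | hR
      · obtain ⟨T, -, hTc⟩ := Finset.exists_subset_card_eq
          (s := (Finset.univ : Finset L)) (n := kL) (by simpa using hkL)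
        exact ⟨T, ∅, hTc, by simp, fun v u => (IsEmpty.false u).elim⟩
      · exfalso
        have hRp : 0 < Fintype.card R := Fintype.card_pos
        have hn2 : 2 ≤ n := by omega
        have h1 : n ^ 10 * (kL + 1) ≤ n ^ 10 * S.toLeft.card := Nat.mul_le_mul_left _ ha
        have h2 : n ^ 2 * (Fintype.card L - kL) ≤ n ^ 2 * Fintype.card L :=
          Nat.mul_le_mul_left _ (Nat.sub_le _ _)
        have h3 : Fintype.card R ≤ n ^ 2 * Fintype.card R :=
          Nat.le_mul_of_pos_left _ (by positivity)
        have h4 : n ^ 3 < n ^ 10 := Nat.pow_lt_pow_right (by omega) (by norm_num)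
        have h5 : n ^ 3 = n ^ 2 * Fintype.card L + n ^ 2 * Fintype.card R := by
          rw [← mul_add, ← hn]; ring
        rw [mul_add, mul_one] at h1
        omega
end

section
/- Let G = (V,E) be a finite hypergraph in which every edge has at most 3 vertices, let U ⊆ V be a hitting set of G, and let U' ⊆ U. Let S = {v ∈ V : there exists e ∈ E with e \ {v} ⊆ U \ U'}, and suppose S ∩ (U \ U') = ∅. Let G̃ be the graph on vertex set V \ (U ∪ S) whose edges are the sets e ∩ (V \ (U ∪ S)) of size 2 arising from edges e ∈ E with e ∩ (U' ∪ S) = ∅. If S' ⊆ V \ (U ∪ S) is a vertex cover of G̃, then U' ∪ S ∪ S' is a hitting set of G. -/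
/-!
Suppose an edge `e` misses `U' ∪ S`. Then `e ∩ (U ∪ S)ᶜ = e \ U`, and this set has at most two
vertices because `e` has at most three and one of them lies in `U`. If it has exactly two, it is an
edge of the graph covered by `S'`. Otherwise there is `v ∈ e` with `e \ {v} ⊆ U`; as `e` misses
`U'`, this says `e \ {v} ⊆ U \ U'`, so that `v ∈ S`, a contradiction.
-/


/-- Correctness of the completion step for the W3HS algorithm: if `U` is a hitting set of a
3-uniform-bounded hypergraph `(V, E)`, `U' ⊆ U`, `S` is the set of vertices `v` for which some
edge `e` satisfies `e \ {v} ⊆ U \ U'`, `S ∩ (U \ U') = ∅`, and `S'` is a vertex cover of the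
graph `G̃` on `V \ (U ∪ S)` whose edges are the sets `e ∩ (V \ (U ∪ S))` of size 2 arising from
edges `e` with `e ∩ (U' ∪ S) = ∅`, then `U' ∪ S ∪ S'` is a hitting set of the hypergraph. -/
theorem stmt9 {V : Type*} [Fintype V] (E : Set (Set V))
    (hE : ∀ e ∈ E, e.Nonempty ∧ e.ncard ≤ 3)
    (U : Set V) (hU : ∀ e ∈ E, (e ∩ U).Nonempty)
    (U' : Set V) (hU' : U' ⊆ U)
    (S : Set V) (hS : S = {v | ∃ e ∈ E, e \ {v} ⊆ U \ U'})
    (hdisj : S ∩ (U \ U') = ∅)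
    (S' : Set V) (hS'sub : S' ⊆ (U ∪ S)ᶜ)
    (hS'cov : ∀ e ∈ E, e ∩ (U' ∪ S) = ∅ → (e ∩ (U ∪ S)ᶜ).ncard = 2 →
      ((e ∩ (U ∪ S)ᶜ) ∩ S').Nonempty) :
    ∀ e ∈ E, (e ∩ (U' ∪ S ∪ S')).Nonempty := by
  intro e he
  by_cases h : e ∩ (U' ∪ S) = ∅
  · have hU'e : ∀ x ∈ e, x ∉ U' := fun x hx hx' =>
      (h ▸ (⟨hx, Or.inl hx'⟩ : x ∈ e ∩ (U' ∪ S)) : x ∈ (∅ : Set V))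
    have hSe : ∀ x ∈ e, x ∉ S := fun x hx hx' =>
      (h ▸ (⟨hx, Or.inr hx'⟩ : x ∈ e ∩ (U' ∪ S)) : x ∈ (∅ : Set V))
    have hW : e ∩ (U ∪ S)ᶜ = e \ U := by
      ext x
      simp only [Set.mem_inter_iff, Set.mem_compl_iff, Set.mem_union, Set.mem_sdiff]
      have := hSe x
      tauto
    obtain ⟨u, hue, huU⟩ := hU e he
    have hle : (e \ U).ncard ≤ 2 := by
      have h1 : (e \ U).ncard < e.ncard :=
        Set.ncard_lt_ncard ⟨Set.sdiff_subset, fun hs => (hs hue).2 huU⟩ (Set.toFinite e)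
      have h2 := (hE e he).2
      omega
    by_cases h2 : (e \ U).ncard = 2
    · obtain ⟨x, hx, hx'⟩ := hS'cov e he h (by rw [hW, h2])
      exact ⟨x, hx.1, Or.inr hx'⟩
    · exfalso
      have hv : ∃ v ∈ e, e \ {v} ⊆ U := by
        rcases (e \ U).eq_empty_or_nonempty with h0 | ⟨v, hv⟩
        · exact ⟨u, hue, Set.sdiff_subset.trans (Set.sdiff_eq_empty.1 h0)⟩
        · refine ⟨v, hv.1, fun x hx => ?_⟩
          by_contra hxU
          have h1 : (e \ U).ncard ≤ 1 := by omega
          exact hx.2 ((Set.ncard_le_one_iff (Set.toFinite _)).1 h1 ⟨hx.1, hxU⟩ hv)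
      obtain ⟨v, hve, hvU⟩ := hv
      refine hSe v hve ?_
      rw [hS]
      exact ⟨e, he, fun x hx => ⟨hvU hx, hU'e x hx.1⟩⟩
  · obtain ⟨x, hx, hx'⟩ := Set.nonempty_iff_ne_empty.2 h
    exact ⟨x, hx, Or.inl hx'⟩
end

section
/- Let G = (V,E) be a finite hypergraph in which every edge has at most 3 vertices, let U ⊆ V be a hitting set of G, and let A ⊆ V be any hitting set of G. Set U' = A ∩ U and S = {v ∈ V : there exists e ∈ E with e \ {v} ⊆ U \ U'}. Then S ∩ (U \ U') = ∅, S ⊆ A, and A \ (U' ∪ S) is a vertex cover of the graph G̃ on vertex set V \ (U ∪ S) whose edges are the sets e ∩ (V \ (U ∪ S)) of size 2 arising from edges e ∈ E with e ∩ (U' ∪ S) = ∅. -/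
/-!
Since `U' = A ∩ U`, the set `U \ U'` is disjoint from `A`. Hence an edge `e` with
`e \ {v} ⊆ U \ U'` can be hit by `A` only at `v`, which gives `S ⊆ A` and therefore
`S ∩ (U \ U') = ∅`. If an edge avoids `U' ∪ S`, the vertex at which `A` hits it lies outside
`A ∩ U` and `S`, hence outside `U ∪ S`, so it covers the corresponding edge of `G̃`.
-/

/-- Completeness of the W3HS algorithm: if `U` and `A` are hitting sets of a hypergraph with
edges of size at most 3, `U' = A ∩ U`, and `S` is the set of vertices `v` for which some edge
`e` satisfies `e \ {v} ⊆ U \ U'`, then `S ∩ (U \ U') = ∅`, `S ⊆ A`, and `A \ (U' ∪ S)` is a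
vertex cover of the graph `G̃` on `V \ (U ∪ S)` whose edges are the sets `e ∩ (V \ (U ∪ S))`
of size 2 arising from edges `e` with `e ∩ (U' ∪ S) = ∅`. -/
theorem stmt10 {V : Type*} [Fintype V] (E : Set (Set V))
    (hE : ∀ e ∈ E, e.Nonempty ∧ e.ncard ≤ 3)
    (U : Set V) (hU : ∀ e ∈ E, (e ∩ U).Nonempty)
    (A : Set V) (hA : ∀ e ∈ E, (e ∩ A).Nonempty)
    (U' : Set V) (hU' : U' = A ∩ U)
    (S : Set V) (hS : S = {v | ∃ e ∈ E, e \ {v} ⊆ U \ U'}) :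
    S ∩ (U \ U') = ∅ ∧ S ⊆ A ∧
    (∀ e ∈ E, e ∩ (U' ∪ S) = ∅ → (e ∩ (U ∪ S)ᶜ).ncard = 2 →
      ((e ∩ (U ∪ S)ᶜ) ∩ (A \ (U' ∪ S))).Nonempty) := by
  have hSA : S ⊆ A := by
    intro v hv
    rw [hS] at hv
    obtain ⟨e, he, hev⟩ := hv
    obtain ⟨a, hae, haA⟩ := hA e he
    -- `e \ {v}` misses `A`, so the vertex at which `A` hits `e` can only be `v`.
    by_cases hav : a = v
    · exact hav ▸ haA
    · have haU := hev ⟨hae, hav⟩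
      exact absurd (hU' ▸ ⟨haA, haU.1⟩) haU.2
  refine ⟨?_, hSA, ?_⟩
  · ext v
    refine ⟨fun ⟨hvS, hvU, hvU'⟩ => hvU' (hU' ▸ ⟨hSA hvS, hvU⟩), fun h => h.elim⟩
  · intro e he hdisj _
    obtain ⟨a, hae, haA⟩ := hA e he
    have ha : a ∉ U' ∪ S := fun h => (hdisj ▸ (⟨hae, h⟩ : a ∈ e ∩ (U' ∪ S)) : a ∈ (∅ : Set V))
    refine ⟨a, ⟨hae, ?_⟩, haA, ha⟩
    rintro (haU | haS)
    · exact ha (Or.inl (hU' ▸ ⟨haA, haU⟩))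
    · exact ha (Or.inr haS)
end

section
/- Let G = (V,E) be a finite simple undirected graph, let w : V → ℝ be a weight function with w(u) > 0 for all u, let W be a real number, and let v ∈ V be a leaf whose unique neighbor is u, with w(v) < w(u). Define w' : V \ {v} → ℝ by w'(u) = w(u) − w(v) and w'(x) = w(x) for all x ≠ u. Then G has a vertex cover of total w-weight at most W if and only if the induced subgraph G[V \ {v}] has a vertex cover of total w'-weight at most W − w(v). Moreover, if C' is a vertex cover of G[V \ {v}], then the set C' if u ∈ C', and C' ∪ {v} otherwise, is a vertex cover of G of w-weight at most w'(C') + w(v). -/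
/-!
The weights `w'` and `w` of a set `S` differ by `w v` if `u ∈ S` and agree otherwise
(`sum_reducedWeight`). Every vertex cover of `G` contains `u` or `v`, since it covers the edge `vu`.
Passing from a cover `C` of `G` with weights `w` to `C \ {v}` with weights `w'` therefore lowers the
total by at least `w v`: through the lowered weight of
`u` if `u ∈ C`, and through the removal of `v` itself otherwise. Conversely, a cover `C'` of the
graph without `v` misses at most the edge `vu`. If `u ∈ C'` nothing is missed, and returning from
`w'` to `w` adds `w v`; otherwise adding `v` repairs the cover at the price `w v`.
-/

theorem sum_reducedWeight {V : Type*} [DecidableEq V] (w : V → ℝ) (v u : V) (S : Finset V) :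
    ∑ x ∈ S, (if x = u then w u - w v else w x) =
      ∑ x ∈ S, w x - (if u ∈ S then w v else 0) := by
  have h : ∀ x, (if x = u then w u - w v else w x) = w x - (if x = u then w v else 0) := by
    intro x
    split_ifs with hx
    · rw [hx]
    · ring
  simp only [h, Finset.sum_sub_distrib, Finset.sum_ite_eq']

/-- Weighted leaf reduction for WVC: let `v` be a leaf of `G` with unique neighbor `u`,
`w(v) < w(u)`, and let `w'` agree with `w` except `w'(u) = w(u) - w(v)`. Then `G` has a
vertex cover of `w`-weight at most `W` iff `G[V \ {v}]` has a vertex cover of `w'`-weight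
at most `W - w(v)`. Moreover, from any vertex cover `C'` of `G[V \ {v}]` one obtains a
vertex cover of `G` (namely `C'` if `u ∈ C'`, else `C' ∪ {v}`) of `w`-weight at most
`w'(C') + w(v)`. -/
theorem stmt18 {V : Type*} [Fintype V] [DecidableEq V] (G : SimpleGraph V)
    (w : V → ℝ) (hw : ∀ x, 0 < w x) (W : ℝ)
    (v u : V) (hvu : G.Adj v u) (hleaf : ∀ x, G.Adj v x → x = u)
    (hlt : w v < w u)
    (w' : V → ℝ) (hw' : w' = fun x => if x = u then w u - w v else w x) :
    ((∃ C : Finset V, (∀ a b, G.Adj a b → a ∈ C ∨ b ∈ C) ∧ ∑ x ∈ C, w x ≤ W) ↔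
      (∃ C' : Finset V, v ∉ C' ∧ (∀ a b, G.Adj a b → a ≠ v → b ≠ v → a ∈ C' ∨ b ∈ C') ∧
        ∑ x ∈ C', w' x ≤ W - w v)) ∧
    (∀ C' : Finset V, v ∉ C' → (∀ a b, G.Adj a b → a ≠ v → b ≠ v → a ∈ C' ∨ b ∈ C') →
      (∀ a b, G.Adj a b →
          a ∈ (if u ∈ C' then C' else insert v C') ∨
          b ∈ (if u ∈ C' then C' else insert v C')) ∧
      ∑ x ∈ (if u ∈ C' then C' else insert v C'), w x ≤ (∑ x ∈ C', w' x) + w v) := by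
  subst hw'
  have hne : u ≠ v := hvu.ne'
  have lift : ∀ C' : Finset V, v ∉ C' →
      (∀ a b, G.Adj a b → a ≠ v → b ≠ v → a ∈ C' ∨ b ∈ C') →
      (∀ a b, G.Adj a b →
          a ∈ (if u ∈ C' then C' else insert v C') ∨
          b ∈ (if u ∈ C' then C' else insert v C')) ∧
      ∑ x ∈ (if u ∈ C' then C' else insert v C'), w x ≤
        (∑ x ∈ C', (if x = u then w u - w v else w x)) + w v := by
    intro C' hv hC'
    rw [sum_reducedWeight]
    refine ⟨fun a b hab => ?_, ?_⟩
    · by_cases ha : a = v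
      · subst ha
        have hb := hleaf b hab
        subst hb
        split_ifs with hu <;> simp [hu]
      by_cases hb : b = v
      · subst hb
        have ha' := hleaf a hab.symm
        subst ha'
        split_ifs with hu <;> simp [hu]
      have h := hC' a b hab ha hb
      split_ifs with hu
      · exact h
      · exact h.imp Finset.mem_insert_of_mem Finset.mem_insert_of_mem
    · split_ifs with hu
      · linarith
      · rw [Finset.sum_insert hv]
        linarith
  refine ⟨⟨?_, ?_⟩, lift⟩
  · rintro ⟨C, hC, hCW⟩
    refine ⟨C.erase v, Finset.notMem_erase v C, fun a b hab ha hb => ?_, ?_⟩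
    · simpa [ha, hb] using hC a b hab
    · rw [sum_reducedWeight]
      by_cases hv : v ∈ C
      · have hs := Finset.add_sum_erase C w hv
        have hwv := hw v
        split_ifs <;> linarith
      ·
        -- The edge `vu` forces `u ∈ C`.
        have hu : u ∈ C := (hC v u hvu).resolve_left hv
        rw [Finset.erase_eq_of_notMem hv, if_pos hu]
        linarith
  · rintro ⟨C', hv, hC', hCW⟩
    obtain ⟨hcov, hle⟩ := lift C' hv hC'
    exact ⟨_, hcov, by linarith⟩
end
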